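/- For every k ≥ 3, the PFA A_k is carefully synchronizing, and every carefully synchronizing word for A_k has length at least fib(k) − 1. -/

import Mathlib

/-- The three symbols of the PFA `A_k`. -/
inductive ASym : Type
  | s
  | r
  | c
  deriving DecidableEq

/-- States of `A_k`: `(t, i)` with `t = 0,1,2` standing for `A_{i+1}`, `B_{i+1}`,
`C_{i+1}` respectively. -/
abbrev AState (k : ℕ) := Fin 3 × Fin k

/-- The transition function of the PFA `A_k` (on `3k` states, `k ≥ 3`). -/
def Adelta (k : ℕ) (hk : 3 ≤ k) : AState k → ASym → Option (AState k) := fun q x =>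
  match x with
  | ASym.s => if q.2.val < 2 then some (2, q.2) else some (0, q.2)
  | ASym.c => some (q.1, ⟨(q.2.val + 1) % k, Nat.mod_lt _ (by omega)⟩)
  | ASym.r =>
    if q.2.val < 2 then
      (if q.1.val = 0 then none
       else if q.1.val = 1 then some (0, q.2)
       else some (2, q.2))
    else if q.2.val = 2 then
      (if q.1.val = 0 then some (1, q.2)
       else if q.1.val = 1 then none
       else some (1, ⟨1, by omega⟩))
    else some q

/-- One step of a PFA on an `Option` state. -/
def pfaStep {Q σ : Type*} (δ : Q → σ → Option Q) (o : Option Q) (a : σ) : Option Q :=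
  o.bind fun q => δ q a

/-- The (partial) state reached from `q` after reading word `w` in the PFA `δ`. -/
def pfaRun {Q σ : Type*} (δ : Q → σ → Option Q) (q : Q) (w : List σ) : Option Q :=
  w.foldl (pfaStep δ) (some q)

/-- A word `w` is carefully synchronizing for the PFA `δ`. -/
def IsCareSyncWord {Q σ : Type*} (δ : Q → σ → Option Q) (w : List σ) : Prop :=
  ∃ qs : Q, ∀ q : Q, pfaRun δ q w = some qs

/-!
The states occupied after reading `s` form the cyclic string `C C A ⋯ A`; `c` rotates it and `s`
resets it. If entry `n` is in first position, `r` is defined only if entries `n` and `n + 1` are not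
`A` and entry `n + 2` is not `B`. As long as this window does not reach across the end of the
string, `r` turns a `B` among the first two entries into `A`, and the `A` at `n + 2` into `B`.
Giving a `B` at index `j` the weight `fib (j + 1) - 1`, each such carry raises the total weight by
exactly one, while a window reaching across the end requires the last entry to be a `B`, whose
weight is `fib k - 1`. Before that, no two states can merge.

Conversely, carries do produce a `B` in the last entry. Rotating once more, `r` then merges the
second `C` into the position of the first one. The word read so far moves every state one position
ahead, except that a state in second position stays there, so its powers gather all states in second
position.
-/

section PartialAutomaton

variable {Q σ ι κ : Type*} {δ : Q → σ → Option Q}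

theorem foldl_pfaStep (o : Option Q) (w : List σ) :
    w.foldl (pfaStep δ) o = o.bind fun q => pfaRun δ q w := by
  cases o with
  | some q => rfl
  | none =>
    induction w with
    | nil => rfl
    | cons _ _ ih => exact ih

theorem pfaRun_cons (q : Q) (a : σ) (w : List σ) :
    pfaRun δ q (a :: w) = (δ q a).bind fun p => pfaRun δ p w :=
  foldl_pfaStep (δ q a) w

theorem pfaRun_append (q : Q) (v w : List σ) :
    pfaRun δ q (v ++ w) = (pfaRun δ q v).bind fun p => pfaRun δ p w := by
  rw [pfaRun, List.foldl_append, foldl_pfaStep, pfaRun]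

theorem pfaRun_singleton (q : Q) (a : σ) : pfaRun δ q [a] = δ q a := by
  rw [pfaRun_cons]
  exact Option.bind_fun_some (δ q a)

/-- A single word carries each state of the family `f` to the state of `g` with the same index. -/
def FamilyReach (δ : Q → σ → Option Q) (f g : ι → Q) : Prop :=
  ∃ w, ∀ i, pfaRun δ (f i) w = some (g i)

namespace FamilyReach

theorem refl (f : ι → Q) : FamilyReach δ f f :=
  ⟨[], fun _ => rfl⟩

theorem trans {f g h : ι → Q} (hfg : FamilyReach δ f g) (hgh : FamilyReach δ g h) :
    FamilyReach δ f h := by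
  obtain ⟨v, hv⟩ := hfg
  obtain ⟨w, hw⟩ := hgh
  exact ⟨v ++ w, fun i => by rw [pfaRun_append, hv, Option.bind_some, hw]⟩

theorem of_letter {f g : ι → Q} (a : σ) (h : ∀ i, δ (f i) a = some (g i)) : FamilyReach δ f g :=
  ⟨[a], fun i => (pfaRun_singleton (f i) a).trans (h i)⟩

theorem comp {f g : ι → Q} (h : FamilyReach δ f g) (e : κ → ι) :
    FamilyReach δ (f ∘ e) (g ∘ e) :=
  h.imp fun _ hw i => hw (e i)

theorem iterate {F : Q → Q} (h : FamilyReach δ id F) : ∀ n : ℕ, FamilyReach δ id F^[n]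
  | 0 => refl id
  | n + 1 => h.trans ((h.iterate n).comp F)

end FamilyReach

theorem le_add_length_of_rank_step {X : Type*} {conf : X → ι → Q} {rank : X → ℕ} {N : ℕ}
    (not_const : ∀ x q, ¬ ∀ i, conf x i = q)
    (step : ∀ x a, rank x < N → (∀ i, ∃ p, δ (conf x i) a = some p) →
      ∃ y, rank y ≤ rank x + 1 ∧ ∀ j, ∃ i, δ (conf x i) a = some (conf y j))
    {w : List σ} {x : X} {q : Q} (hw : ∀ i, pfaRun δ (conf x i) w = some q) :
    N ≤ rank x + w.length := by
  induction w generalizing x with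
  | nil => exact absurd (fun i => Option.some_injective Q (hw i)) (not_const x q)
  | cons a w ih =>
    simp only [pfaRun_cons] at hw
    rcases le_or_gt N (rank x) with hN | hN
    · exact hN.trans (Nat.le_add_right _ _)
    · have hdef : ∀ i, ∃ p, δ (conf x i) a = some p := fun i =>
        (Option.bind_eq_some_iff.1 (hw i)).imp fun _ hp => hp.1
      obtain ⟨y, hrank, hy⟩ := step x a hN hdef
      have hyw : ∀ j, pfaRun δ (conf y j) w = some q := fun j => by
        obtain ⟨i, hi⟩ := hy j
        simpa only [hi, Option.bind_some] using hw i
      have := ih hyw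
      rw [List.length_cons]
      omega

end PartialAutomaton

section Carry

/-- Entry `j` of the string `C C x₂ x₃ ⋯` over `{A, B}` whose `B`s are at the indices in `S`, with
`0, 1, 2` encoding `A, B, C`. The elements `0` and `1` of `S` play no role. -/
def entry (S : Finset ℕ) (j : ℕ) : Fin 3 :=
  if j < 2 then 2 else if j ∈ S then 1 else 0

/-- The effect of `r` on a string whose entries `n`, `n + 1`, `n + 2` are in the first three
positions. -/
def carry (S : Finset ℕ) (n : ℕ) : Finset ℕ :=
  insert (n + 2) ((S.erase (n + 1)).erase n)

/-- The condition under which `r` is defined on a string whose entries `n`, `n + 1`, `n + 2` are in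
the first three positions. -/
structure CanCarry (S : Finset ℕ) (n : ℕ) : Prop where
  fst : entry S n ≠ 0
  snd : entry S (n + 1) ≠ 0
  trd : entry S (n + 2) = 0

/-- A carry within the first `k` entries of a string. -/
def CarryStep (k : ℕ) (S T : Finset ℕ) : Prop :=
  ∃ n, n + 2 < k ∧ CanCarry S n ∧ T = carry S n

/-- A weight of strings that grows by one with every carry: a `B` at index `j` counts
`fib (j + 1) - 1`, the number of carries it takes to create it. -/
def weight (S : Finset ℕ) : ℕ :=
  ∑ j ∈ S, (Nat.fib (j + 1) - 1)

variable {S T : Finset ℕ} {j n : ℕ}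

theorem entry_ne_zero_iff : entry S j ≠ 0 ↔ j < 2 ∨ j ∈ S := by
  unfold entry
  split_ifs <;> simp_all

theorem entry_eq_zero_of_ne_one (hj : 2 ≤ j) (h : entry S j ≠ 1) : entry S j = 0 := by
  simp_all [entry, hj.not_gt]

theorem entry_congr (h : j ∈ S ↔ j ∈ T) : entry S j = entry T j := by
  simp only [entry, h]

theorem entry_carry_of_lt (h : j < n) : entry (carry S n) j = entry S j :=
  entry_congr (by grind [carry])

theorem entry_carry_of_gt (h : n + 2 < j) : entry (carry S n) j = entry S j :=
  entry_congr (by grind [carry])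

theorem entry_carry_of_mem_window (hn : n ≤ j) (hj : j < n + 2) :
    entry (carry S n) j = if entry S j = 1 then 0 else entry S j := by
  have hmem : j ∉ carry S n := by grind [carry]
  unfold entry
  split_ifs <;> simp_all

theorem entry_carry_add_two : entry (carry S n) (n + 2) = 1 := by
  simp [entry, carry]

theorem weight_erase_add (h : entry S j ≠ 0) :
    weight (S.erase j) + (Nat.fib (j + 1) - 1) = weight S := by
  by_cases hj : j ∈ S
  · exact Finset.sum_erase_add S _ hj
  · have : j = 0 ∨ j = 1 := by
      have := (entry_ne_zero_iff.1 h).resolve_right hj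
      omega
    rw [Finset.erase_eq_of_notMem hj]
    rcases this with rfl | rfl <;> rfl

theorem weight_carry (h : CanCarry S n) : weight (carry S n) = weight S + 1 := by
  have hnotMem : n + 2 ∉ (S.erase (n + 1)).erase n := by
    have := mt entry_ne_zero_iff.2 (not_not.2 h.trd)
    grind
  have hfst : entry (S.erase (n + 1)) n ≠ 0 := by
    rw [entry_congr (T := S) (by grind)]
    exact h.fst
  have hinsert : weight (carry S n) =
      Nat.fib (n + 2 + 1) - 1 + weight ((S.erase (n + 1)).erase n) :=
    Finset.sum_insert hnotMem
  have hfib : Nat.fib (n + 2 + 1) = Nat.fib (n + 1) + Nat.fib (n + 1 + 1) := Nat.fib_add_two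
  have hpos : 0 < Nat.fib (n + 1) := Nat.fib_pos.2 n.succ_pos
  have hpos' : 0 < Nat.fib (n + 1 + 1) := Nat.fib_pos.2 (n + 1).succ_pos
  have := weight_erase_add hfst
  have := weight_erase_add h.snd
  omega

theorem le_weight_of_mem (h : j ∈ S) : Nat.fib (j + 1) - 1 ≤ weight S :=
  Finset.single_le_sum (f := fun j => Nat.fib (j + 1) - 1) (fun _ _ => Nat.zero_le _) h

theorem exists_reflTransGen_carryStep_entry_ne_zero {k : ℕ} (S : Finset ℕ) (hj : j < k) :
    ∃ T, Relation.ReflTransGen (CarryStep k) S T ∧ entry T j ≠ 0 ∧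
      ∀ i, j < i → entry T i = entry S i := by
  induction j using Nat.twoStepInduction generalizing S with
  | zero => exact ⟨S, .refl, entry_ne_zero_iff.2 (.inl (by omega)), fun _ _ => rfl⟩
  | one => exact ⟨S, .refl, entry_ne_zero_iff.2 (.inl (by omega)), fun _ _ => rfl⟩
  | more n ih₀ ih₁ =>
    by_cases hS : entry S (n + 2) = 0
    · obtain ⟨T, hST, hT, hTS⟩ := ih₁ S (by omega)
      obtain ⟨U, hTU, hU, hUT⟩ := ih₀ T (by omega)
      have hUS : ∀ i, n + 1 < i → entry U i = entry S i := fun i hi => by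
        rw [hUT i (by omega), hTS i hi]
      have hcarry : CanCarry U n :=
        ⟨hU, by rwa [hUT _ n.lt_succ_self], by rwa [hUS _ (n + 1).lt_succ_self]⟩
      refine ⟨carry U n, (hST.trans hTU).tail ⟨n, hj, hcarry, rfl⟩, ?_, fun i hi => ?_⟩
      · rw [entry_carry_add_two]
        decide
      · rw [entry_carry_of_gt hi, hUS i (by omega)]
    · exact ⟨S, .refl, hS, fun _ _ => rfl⟩

end Carry

section Automaton

variable {k : ℕ} {hk : 3 ≤ k} {t : Fin 3} {p : Fin k}

theorem Adelta_r_of_val_lt_two (hp : p.val < 2) (ht : t ≠ 0) :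
    Adelta k hk (t, p) ASym.r = some (if t = 1 then 0 else t, p) := by
  fin_cases t <;> simp_all [Adelta]

theorem Adelta_r_zero_of_val_eq_two (hp : p.val = 2) :
    Adelta k hk (0, p) ASym.r = some (1, p) := by
  simp [Adelta, hp]

theorem Adelta_r_two_of_val_eq_two (hp : p.val = 2) :
    Adelta k hk (2, p) ASym.r = some (1, ⟨1, by omega⟩) := by
  simp [Adelta, hp]

theorem Adelta_r_of_two_lt_val (hp : 2 < p.val) :
    Adelta k hk (t, p) ASym.r = some (t, p) := by
  simp [Adelta, hp.not_gt, hp.ne']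

theorem ne_zero_of_Adelta_r_eq_some {q : AState k} (hp : p.val < 2)
    (h : Adelta k hk (t, p) ASym.r = some q) : t ≠ 0 := by
  rintro rfl
  simp [Adelta, hp] at h

theorem ne_one_of_Adelta_r_eq_some {q : AState k} (hp : p.val = 2)
    (h : Adelta k hk (t, p) ASym.r = some q) : t ≠ 1 := by
  rintro rfl
  simp [Adelta, hp] at h

/-- The states occupied by the first `k` entries of the string given by `S`, rotated such that
entry `n` is in first position. -/
def config (k : ℕ) [NeZero k] (S : Finset ℕ) (n j : Fin k) : AState k :=
  (entry S j, j - n)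

variable [NeZero k] {S : Finset ℕ} {n j : Fin k}

theorem config_ne_const (hk : 2 ≤ k) (S : Finset ℕ) (n : Fin k) (q : AState k) :
    ¬ ∀ j, config k S n j = q := by
  intro h
  have : Nontrivial (Fin k) := Fin.nontrivial_iff_two_le.2 hk
  obtain ⟨i, j, hij⟩ := exists_pair_ne (Fin k)
  exact hij (sub_left_injective (congrArg Prod.snd ((h i).trans (h j).symm)))

theorem Adelta_c (q : AState k) : Adelta k hk q ASym.c = some (q.1, q.2 + 1) := by
  simp [Adelta, Fin.ext_iff, Fin.val_add]

theorem Adelta_c_config (S : Finset ℕ) (n j : Fin k) :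
    Adelta k hk (config k S n j) ASym.c = some (config k S (n - 1) j) := by
  rw [Adelta_c, config, config, sub_sub_eq_add_sub, sub_add_eq_add_sub]

theorem Adelta_s (q : AState k) : Adelta k hk q ASym.s = some (config k ∅ 0 q.2) := by
  by_cases h : q.2.val < 2 <;> simp [Adelta, config, entry, h]

theorem Adelta_r_config (hn : n.val + 2 < k) (h : CanCarry S n) (j : Fin k) :
    Adelta k hk (config k S n j) ASym.r = some (config k (carry S n) n j) := by
  unfold config
  rcases lt_or_ge j n with hlt | hle
  · have hval : (j - n).val = k + j - n := Fin.coe_sub_iff_lt.2 hlt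
    rw [Adelta_r_of_two_lt_val (by omega), entry_carry_of_lt hlt]
  · have hval : (j - n).val = j - n := Fin.coe_sub_iff_le.2 hle
    rcases lt_trichotomy j.val (n + 2) with hj | hj | hj
    · have hne : entry S j ≠ 0 := by
        rcases (show j.val = n ∨ j.val = n + 1 by omega) with h' | h' <;> rw [h']
        exacts [h.fst, h.snd]
      rw [Adelta_r_of_val_lt_two (by omega) hne, entry_carry_of_mem_window hle hj]
    · rw [hj, h.trd, entry_carry_add_two, Adelta_r_zero_of_val_eq_two (by omega)]
    · rw [Adelta_r_of_two_lt_val (by omega), entry_carry_of_gt hj]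

theorem canCarry_of_Adelta_r_config (hn : n.val + 2 < k)
    (h : ∀ j, ∃ q, Adelta k hk (config k S n j) ASym.r = some q) : CanCarry S n := by
  have window : ∀ i, n.val + i < k → ∃ p : Fin k, p.val = i ∧
      ∃ q, Adelta k hk (entry S (n + i), p) ASym.r = some q := by
    intro i hi
    have hval : (⟨n + i, hi⟩ - n : Fin k).val = n + i - n :=
      Fin.sub_val_of_le (Fin.le_def.2 (Nat.le_add_right n.val i))
    exact ⟨⟨n + i, hi⟩ - n, hval.trans (Nat.add_sub_cancel_left n.val i), h ⟨n + i, hi⟩⟩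
  obtain ⟨p₀, hp₀, q₀, hq₀⟩ := window 0 (by omega)
  obtain ⟨p₁, hp₁, q₁, hq₁⟩ := window 1 (by omega)
  obtain ⟨p₂, hp₂, q₂, hq₂⟩ := window 2 hn
  exact ⟨ne_zero_of_Adelta_r_eq_some (by omega) hq₀, ne_zero_of_Adelta_r_eq_some (by omega) hq₁,
    entry_eq_zero_of_ne_one (by omega) (ne_one_of_Adelta_r_eq_some hp₂ hq₂)⟩

theorem last_mem_of_Adelta_r_config (hn : k ≤ n.val + 2)
    (h : ∀ j, ∃ q, Adelta k hk (config k S n j) ASym.r = some q) : k - 1 ∈ S := by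
  obtain ⟨q, hq⟩ := h ⟨k - 1, by omega⟩
  have hle : n.val ≤ k - 1 := by omega
  have hval : (⟨k - 1, by omega⟩ - n : Fin k).val = k - 1 - n :=
    Fin.sub_val_of_le (Fin.le_def.2 hle)
  exact (entry_ne_zero_iff.1 (ne_zero_of_Adelta_r_eq_some (by omega) hq)).resolve_left
    (by simp only; omega)

theorem exists_config_step (n : Fin k) (a : ASym) (hS : weight S < Nat.fib k - 1)
    (h : ∀ j, ∃ q, Adelta k hk (config k S n j) a = some q) :
    ∃ T m, weight T ≤ weight S + 1 ∧
      ∀ j, ∃ i, Adelta k hk (config k S n i) a = some (config k T m j) := by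
  cases a with
  | s =>
    refine ⟨∅, 0, Nat.zero_le _, fun j => ⟨j + n, ?_⟩⟩
    have hpos : (config k S n (j + n)).2 = j := add_sub_cancel_right j n
    rw [Adelta_s, hpos]
  | c => exact ⟨S, n - 1, Nat.le_succ _, fun j => ⟨j, Adelta_c_config S n j⟩⟩
  | r =>
    have hn : n.val + 2 < k := by
      by_contra! hn
      have := le_weight_of_mem (last_mem_of_Adelta_r_config hn h)
      rw [Nat.sub_add_cancel (by omega)] at this
      omega
    have hcarry := canCarry_of_Adelta_r_config hn h
    exact ⟨carry S n, n, (weight_carry hcarry).le, fun j => ⟨j, Adelta_r_config hn hcarry j⟩⟩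

theorem fib_sub_one_le_length_of_isCareSyncWord {w : List ASym}
    (hw : IsCareSyncWord (Adelta k hk) w) :
    Nat.fib k - 1 ≤ w.length := by
  obtain ⟨q, hq⟩ := hw
  have := le_add_length_of_rank_step (x := ((∅, 0) : Finset ℕ × Fin k))
    (conf := fun x => config k x.1 x.2) (rank := fun x => weight x.1)
    (fun x => config_ne_const (by omega) x.1 x.2)
    (fun x a hx h => by
      obtain ⟨T, m, hT⟩ := exists_config_step x.2 a hx h
      exact ⟨(T, m), hT⟩)
    (fun j => hq (config k ∅ 0 j))
  simpa [weight] using this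

theorem familyReach_config_rotate (S : Finset ℕ) (n m : Fin k) :
    FamilyReach (Adelta k hk) (config k S n) (config k S m) := by
  have step : ∀ n, FamilyReach (Adelta k hk) (config k S n) (config k S (n - 1)) := fun n =>
    .of_letter ASym.c (Adelta_c_config S n)
  have rotate : ∀ l : ℕ, FamilyReach (Adelta k hk) (config k S n) (config k S (n - l • 1)) := by
    intro l
    induction l with
    | zero => simpa using FamilyReach.refl (config k S n)
    | succ l ih => simpa only [succ_nsmul, sub_add_eq_sub_sub] using ih.trans (step _)
  have hm : n - (n - m).val • 1 = m := by
    open Fin.CommRing in rw [nsmul_one, Fin.cast_val_eq_self, sub_sub_cancel]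
  simpa only [hm] using rotate (n - m).val

theorem familyReach_config_of_reflTransGen {T : Finset ℕ}
    (h : Relation.ReflTransGen (CarryStep k) S T) (n m : Fin k) :
    FamilyReach (Adelta k hk) (config k S n) (config k T m) := by
  induction h generalizing m with
  | refl => exact familyReach_config_rotate S n m
  | tail _ hstep ih =>
    obtain ⟨i, hi, hcarry, rfl⟩ := hstep
    have hr := Adelta_r_config (hk := hk) (n := ⟨i, by omega⟩) hi hcarry
    exact ((ih _).trans (.of_letter ASym.r hr)).trans (familyReach_config_rotate _ _ m)

/-- The position reached from position `p` by the word that resets, creates a `B` in the last entry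
by carries, and merges the second entry into the first. -/
def foldPosition (p : Fin k) : Fin k :=
  if p = 1 then 1 else p + 1

-- The offset `-1` puts the last entry into the first position, and the second `C` into the third
-- position, from which `r` moves it back to the second.
theorem exists_Adelta_r_config_neg_one (hS : entry S (k - 1) ≠ 0) (j : Fin k) :
    ∃ t, Adelta k hk (config k S (-1) j) ASym.r = some (t, foldPosition j) := by
  have h1 : (1 : Fin k).val = 1 := by rw [Fin.val_one', Nat.mod_eq_of_lt (by omega)]
  rw [config, sub_neg_eq_add, foldPosition]
  by_cases hlast : j.val + 1 < k
  · have hval : (j + 1).val = j + 1 := Fin.val_add_one_of_lt' hlast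
    rcases lt_trichotomy j.val 1 with hj | hj | hj
    · have hne : entry S j ≠ 0 := entry_ne_zero_iff.2 (.inl (by omega))
      rw [if_neg (by rw [Fin.ext_iff]; omega), Adelta_r_of_val_lt_two (by omega) hne]
      exact ⟨_, rfl⟩
    · have hC : entry S j = 2 := if_pos (by omega)
      rw [hC, if_pos (by rw [Fin.ext_iff]; omega), Adelta_r_two_of_val_eq_two (by omega)]
      exact ⟨1, by simp only [Option.some.injEq, Prod.mk.injEq, Fin.ext_iff, h1, and_self]⟩
    · rw [if_neg (by rw [Fin.ext_iff]; omega), Adelta_r_of_two_lt_val (by omega)]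
      exact ⟨_, rfl⟩
  · have hj : j.val = k - 1 := by omega
    have hval : (j + 1).val = 0 := by
      rw [Fin.val_add, h1, hj, Nat.sub_add_cancel (by omega), Nat.mod_self]
    rw [if_neg (by rw [Fin.ext_iff]; omega), Adelta_r_of_val_lt_two (by omega) (by rwa [hj])]
    exact ⟨_, rfl⟩

theorem exists_familyReach_foldPosition (hk : 3 ≤ k) :
    ∃ F : AState k → AState k, FamilyReach (Adelta k hk) id F ∧
      ∀ q, (F q).2 = foldPosition q.2 := by
  obtain ⟨S, hreach, hS, -⟩ :=
    exists_reflTransGen_carryStep_entry_ne_zero ∅ (show k - 1 < k by omega)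
  choose t ht using exists_Adelta_r_config_neg_one (hk := hk) hS
  have reset : FamilyReach (Adelta k hk) id (config k ∅ 0 ∘ Prod.snd) :=
    .of_letter ASym.s Adelta_s
  have merge : FamilyReach (Adelta k hk) (config k ∅ 0) fun j => (t j, foldPosition j) :=
    (familyReach_config_of_reflTransGen hreach 0 (-1)).trans (.of_letter ASym.r ht)
  exact ⟨_, reset.trans (merge.comp Prod.snd), fun _ => rfl⟩

-- `(1 - p).val` is the number of steps from `p` to `1`.
theorem val_one_sub_foldPosition (p : Fin k) :
    (1 - foldPosition p).val = (1 - p).val - 1 := by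
  unfold foldPosition
  split_ifs with hp
  · simp [hp]
  · rw [sub_add_eq_sub_sub, Fin.val_sub_one_of_ne_zero (sub_ne_zero.2 (Ne.symm hp))]

theorem exists_isCareSyncWord : ∃ w, IsCareSyncWord (Adelta k hk) w := by
  obtain ⟨F, hF, hpos⟩ := exists_familyReach_foldPosition hk
  have dist_iterate : ∀ n q, (1 - (F^[n] q).2).val = (1 - q.2).val - n := by
    intro n q
    induction n with
    | zero => rfl
    | succ n ih =>
      rw [Function.iterate_succ_apply', hpos, val_one_sub_foldPosition, ih, Nat.sub_sub]
  have gathered : ∀ q, (F^[k] q).2 = 1 := fun q => by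
    have : (1 - (F^[k] q).2).val = 0 := by
      rw [dist_iterate]
      exact Nat.sub_eq_zero_of_le (Fin.is_lt _).le
    exact (sub_eq_zero.1 (Fin.val_eq_zero_iff.1 this)).symm
  have reset : ∀ q, Adelta k hk (F^[k] q) ASym.s = some (config k ∅ 0 1) := fun q => by
    rw [Adelta_s, gathered]
  obtain ⟨w, hw⟩ := (hF.iterate k).trans (.of_letter ASym.s reset)
  exact ⟨w, _, hw⟩

end Automaton

/-- For every `k ≥ 3`, the PFA `A_k` is carefully synchronizing, and every carefully
synchronizing word for `A_k` has length at least `fib(k) − 1`. -/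
theorem Ak_care_sync (k : ℕ) (hk : 3 ≤ k) :
    (∃ w : List ASym, IsCareSyncWord (Adelta k hk) w) ∧
      ∀ w : List ASym, IsCareSyncWord (Adelta k hk) w → Nat.fib k - 1 ≤ w.length := by
  have : NeZero k := ⟨by omega⟩
  exact ⟨exists_isCareSyncWord, fun _ => fib_sub_one_le_length_of_isCareSyncWord⟩
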